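/- For all integers n, m with 0 < m < n and every x ∈ [−1,1], the Lebesgue function of the scaling basis satisfies Σ_{k=1}^{n} |Φ_{n,k}^m(x)| ≤ (1 + 2π·(n+m−1)/n)·c_∞ ≤ (1 + 4π)·c_∞, where c_∞ = max_{|x|≤1} ∫_{−1}^{1} |v_n^m(x,y)| w(y) dy. -/

import Mathlib

open Real MeasureTheory Finset

/-- Chebyshev nodes of the first kind: `x_k^n = cos((2k-1)π/(2n))`. -/
noncomputable def chebNode (n k : ℕ) : ℝ :=
  Real.cos ((2 * (k : ℝ) - 1) * Real.pi / (2 * (n : ℝ)))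

/-- Orthonormal Chebyshev polynomials of the first kind. -/
noncomputable def chebP (r : ℕ) (x : ℝ) : ℝ :=
  if r = 0 then Real.sqrt (1 / Real.pi)
  else Real.sqrt (2 / Real.pi) * Real.cos ((r : ℝ) * Real.arccos x)

/-- Darboux kernel `K_r(x,y) = Σ_{s=0}^r p_s(x) p_s(y)`. -/
noncomputable def darboux (r : ℕ) (x y : ℝ) : ℝ :=
  ∑ s ∈ Finset.range (r + 1), chebP s x * chebP s y

/-- de la Vallée Poussin kernel `v_n^m(x,y) = (1/(2m)) Σ_{r=n-m}^{n+m-1} K_r(x,y)`. -/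
noncomputable def vpK (n m : ℕ) (x y : ℝ) : ℝ :=
  (1 / (2 * (m : ℝ))) * ∑ r ∈ Finset.Icc (n - m) (n + m - 1), darboux r x y

/-- The Chebyshev weight `w(x) = 1/√(1-x²)`. -/
noncomputable def chebW (x : ℝ) : ℝ := 1 / Real.sqrt (1 - x ^ 2)

/-- Scaling functions `Φ_{n,k}^m(x) = (π/n) v_n^m(x_k^n, x)`. -/
noncomputable def scal (n m k : ℕ) (x : ℝ) : ℝ :=
  (Real.pi / (n : ℝ)) * vpK n m (chebNode n k) x

/-- The nodes `y_k^n`, `k = 1,…,2n`: the Chebyshev nodes of order `3n` not of order `n`. -/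
noncomputable def yNode (n k : ℕ) : ℝ := chebNode (3 * n) (3 * k / 2)

/-- Wavelet functions `ψ_{n,k}^m`. -/
noncomputable def wav (n m k : ℕ) (x : ℝ) : ℝ :=
  (Real.pi / (3 * (n : ℝ))) * vpK (3 * n) m (yNode n k) x -
    ∑ h ∈ Finset.Icc 1 n,
      scal n m h (yNode n k) * ((Real.pi / (3 * (n : ℝ))) * vpK (3 * n) m (chebNode n h) x)

/-- Filter coefficients `μ_{n,r}^m`. -/
noncomputable def muC (n m r : ℕ) : ℝ :=
  if r ≤ n - m then 1
  else if r < n + m then ((m : ℝ) + (n : ℝ) - (r : ℝ)) / (2 * (m : ℝ))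
  else 0

/-- Squared norms `ν_{n,r}^m` of the orthogonal scaling basis. -/
noncomputable def nuC (n m r : ℕ) : ℝ :=
  if r ≤ n - m then 1 else ((m : ℝ) ^ 2 + ((n : ℝ) - (r : ℝ)) ^ 2) / (2 * (m : ℝ) ^ 2)

/-- Orthogonal scaling basis `Φ_{n,r}^⊥`. -/
noncomputable def scalPerp (n m r : ℕ) (x : ℝ) : ℝ :=
  if r ≤ n - m then chebP r x
  else muC n m r * chebP r x - muC n m (2 * n - r) * chebP (2 * n - r) x

/-- The sup norm on `[-1,1]`. -/
noncomputable def supNorm (f : ℝ → ℝ) : ℝ := ⨆ x : Set.Icc (-1 : ℝ) 1, |f x|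

/-- The Lebesgue constant `c_∞ = max_{|x|≤1} ∫_{-1}^1 |v_n^m(x,y)| w(y) dy`. -/
noncomputable def cInf (n m : ℕ) : ℝ :=
  ⨆ x : Set.Icc (-1 : ℝ) 1, ∫ y in (-1 : ℝ)..1, |vpK n m x y| * chebW y


/-- The exponential `e^{ipu}`. -/
noncomputable def vpE (p : ℤ) (u : ℝ) : ℂ := Complex.exp ((p : ℂ) * (u : ℂ) * Complex.I)

lemma vpE_cont (p : ℤ) : Continuous (vpE p) := by
  unfold vpE; fun_prop

lemma vpE_add (p q : ℤ) (u : ℝ) : vpE (p + q) u = vpE p u * vpE q u := by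
  unfold vpE; rw [← Complex.exp_add]; congr 1; push_cast; ring

lemma vpE_add_arg (p : ℤ) (u v : ℝ) : vpE p (u + v) = vpE p u * vpE p v := by
  unfold vpE; rw [← Complex.exp_add]; congr 1; push_cast; ring

lemma vpE_sub (p : ℤ) (t s : ℝ) : vpE p (t - s) = vpE p t * vpE (-p) s := by
  unfold vpE; rw [← Complex.exp_add]; congr 1; push_cast; ring

lemma vpE_norm (p : ℤ) (u : ℝ) : ‖vpE p u‖ = 1 := by
  unfold vpE
  have := Complex.norm_exp_ofReal_mul_I ((p : ℝ) * u)
  push_cast at this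
  exact this

lemma vpE_conj (p : ℤ) (u : ℝ) : (starRingEnd ℂ) (vpE p u) = vpE (-p) u := by
  unfold vpE
  rw [← Complex.exp_conj]
  congr 1
  simp

lemma vpE_zero (u : ℝ) : vpE 0 u = 1 := by simp [vpE]

lemma vpE_integral (q : ℤ) :
    ∫ s in (-π)..π, vpE q s = if q = 0 then (2 * π : ℂ) else 0 := by
  split_ifs with h
  · subst h
    simp [vpE_zero]
    ring
  · have hc : (q : ℂ) * Complex.I ≠ 0 := by simp [h]
    have h1 : ∀ s : ℝ, vpE q s = Complex.exp ((q : ℂ) * Complex.I * s) := by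
      intro s; unfold vpE; congr 1; ring
    simp_rw [h1]
    rw [integral_exp_mul_complex hc]
    have : Complex.exp ((q : ℂ) * Complex.I * (π : ℝ)) =
        Complex.exp ((q : ℂ) * Complex.I * ((-π : ℝ) : ℂ)) := by
      rw [Complex.exp_eq_exp_iff_exists_int]
      exact ⟨q, by push_cast; ring⟩
    rw [this]; simp

/-- Dirichlet type sum. -/
noncomputable def vpD (L : ℕ) (u : ℝ) : ℂ := ∑ j ∈ Finset.range L, vpE (j : ℤ) u

/-- Unnormalised trapezoidal kernel. -/
noncomputable def vpV (L : ℕ) (u : ℝ) : ℂ :=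
  ∑ j ∈ Finset.range L, ∑ l ∈ Finset.range (3 * L), vpE ((l : ℤ) - j - L) u

lemma vpV_cont (L : ℕ) : Continuous (vpV L) := by
  unfold vpV
  exact continuous_finsetSum _ fun j _ => continuous_finsetSum _ fun l _ => vpE_cont _

lemma vpD_cont (L : ℕ) : Continuous (vpD L) := by
  unfold vpD
  exact continuous_finsetSum _ fun j _ => vpE_cont _

lemma vpD_shift (L a : ℕ) (u : ℝ) :
    ∑ j ∈ Finset.range L, vpE ((a + j : ℕ) : ℤ) u = vpE a u * vpD L u := by
  unfold vpD
  rw [Finset.mul_sum]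
  refine Finset.sum_congr rfl fun j _ => ?_
  rw [← vpE_add]; push_cast; rfl

lemma vpD_three (L : ℕ) (u : ℝ) : ‖vpD (3 * L) u‖ ≤ 3 * ‖vpD L u‖ := by
  have h : vpD (3 * L) u = vpD L u + vpE L u * vpD L u + vpE ((L + L : ℕ) : ℤ) u * vpD L u := by
    rw [← vpD_shift L L, ← vpD_shift L (L + L)]
    have : 3 * L = L + L + L := by ring
    rw [this]
    conv_lhs => unfold vpD
    rw [Finset.sum_range_add, Finset.sum_range_add]
    rfl
  rw [h]
  refine (norm_add_le _ _).trans ?_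
  have h2 := norm_add_le (vpD L u) (vpE L u * vpD L u)
  rw [norm_mul, vpE_norm] at h2 ⊢
  linarith

lemma vpV_eq (L : ℕ) (u : ℝ) :
    vpV L u = vpE (-(L : ℤ)) u * (starRingEnd ℂ) (vpD L u) * vpD (3 * L) u := by
  unfold vpV vpD
  rw [map_sum, Finset.mul_sum (Finset.range L), Finset.sum_mul]
  refine Finset.sum_congr rfl fun j _ => ?_
  rw [Finset.mul_sum]
  refine Finset.sum_congr rfl fun l _ => ?_
  rw [vpE_conj, ← vpE_add, ← vpE_add]
  congr 1; ring

lemma vpV_norm (L : ℕ) (u : ℝ) : ‖vpV L u‖ ≤ 3 * ‖vpD L u‖ ^ 2 := by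
  rw [vpV_eq, norm_mul, norm_mul, vpE_norm, RCLike.norm_conj]
  nlinarith [vpD_three L u, norm_nonneg (vpD L u)]

lemma vpV_repro (L : ℕ) (r : ℤ) (h1 : -(L : ℤ) ≤ r) (h2 : r ≤ L) (t : ℝ) :
    ∫ s in (-π)..π, vpE r s * vpV L (t - s) = 2 * π * L * vpE r t := by
  have hV : ∀ s, vpE r s * vpV L (t - s) = ∑ j ∈ Finset.range L, ∑ l ∈ Finset.range (3 * L),
      vpE ((l : ℤ) - j - L) t * vpE (r - ((l : ℤ) - j - L)) s := by
    intro s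
    unfold vpV
    rw [Finset.mul_sum]
    refine Finset.sum_congr rfl fun j _ => ?_
    rw [Finset.mul_sum]
    refine Finset.sum_congr rfl fun l _ => ?_
    rw [vpE_sub, sub_eq_add_neg r, vpE_add]; ring
  simp_rw [hV]
  rw [intervalIntegral.integral_finsetSum]
  · have : ∀ j ∈ Finset.range L, ∫ s in (-π)..π, ∑ l ∈ Finset.range (3 * L),
      vpE ((l : ℤ) - j - L) t * vpE (r - ((l : ℤ) - j - L)) s = 2 * π * vpE r t := by
      intro j hj
      rw [Finset.mem_range] at hj
      rw [intervalIntegral.integral_finsetSum]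
      · simp_rw [intervalIntegral.integral_const_mul, vpE_integral]
        rw [Finset.sum_eq_single (r + j + L).toNat]
        · have : (((r + j + L).toNat : ℕ) : ℤ) = r + j + L := by omega
          rw [this, if_pos (by ring)]
          rw [show r + j + L - (j : ℤ) - L = r by ring]; ring
        · intro l _ hl
          rw [if_neg (by omega)]; simp
        · intro hh
          rw [Finset.mem_range] at hh
          omega
      · intro l _
        exact (continuous_const.mul (vpE_cont _)).intervalIntegrable _ _
    rw [Finset.sum_congr rfl this]
    simp; ring
  · intro j _
    exact (continuous_finsetSum _ fun l _ =>
      continuous_const.mul (vpE_cont _)).intervalIntegrable _ _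

lemma vpE_cos (r : ℕ) (s : ℝ) : ((Real.cos (r * s) : ℝ) : ℂ) = (vpE r s + vpE (-(r : ℤ)) s) / 2 := by
  rw [Complex.ofReal_cos, Complex.cos]
  unfold vpE
  push_cast
  ring_nf

/-- Being reproduced by the kernel. -/
def vpRep (L : ℕ) (g : ℝ → ℝ) : Prop :=
  Continuous g ∧ ∀ t, ∫ s in (-π)..π, (g s : ℂ) * vpV L (t - s) = 2 * π * L * (g t : ℂ)

lemma vpRep_int {L : ℕ} {g : ℝ → ℝ} (hg : Continuous g) (t : ℝ) :
    IntervalIntegrable (fun s => (g s : ℂ) * vpV L (t - s)) volume (-π) π := by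
  have := vpV_cont L
  exact Continuous.intervalIntegrable (by fun_prop) _ _

lemma vpRep_cos (L r : ℕ) (h : r ≤ L) : vpRep L (fun t => Real.cos (r * t)) := by
  refine ⟨by fun_prop, fun t => ?_⟩
  simp_rw [vpE_cos]
  have hc := vpV_cont L
  have h1 := vpE_cont r
  have h2 := vpE_cont (-(r : ℤ))
  have : ∀ s, (vpE r s + vpE (-(r : ℤ)) s) / 2 * vpV L (t - s) =
      (1 / 2) * (vpE r s * vpV L (t - s) + vpE (-(r : ℤ)) s * vpV L (t - s)) := by
    intro s; ring
  simp_rw [this]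
  rw [intervalIntegral.integral_const_mul, intervalIntegral.integral_add,
    vpV_repro L r (by omega) (by omega), vpV_repro L (-r) (by omega) (by omega)]
  · ring
  · exact Continuous.intervalIntegrable (by fun_prop) _ _
  · exact Continuous.intervalIntegrable (by fun_prop) _ _

lemma vpRep_mul {L : ℕ} {g : ℝ → ℝ} (c : ℝ) (hg : vpRep L g) : vpRep L (fun t => c * g t) := by
  refine ⟨continuous_const.mul hg.1, fun t => ?_⟩
  simp_rw [Complex.ofReal_mul, mul_assoc]
  rw [intervalIntegral.integral_const_mul, hg.2]
  ring

lemma vpRep_sum {L : ℕ} {ι : Type} (S : Finset ι) (g : ι → ℝ → ℝ)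
    (hg : ∀ i ∈ S, vpRep L (g i)) : vpRep L (fun t => ∑ i ∈ S, g i t) := by
  refine ⟨continuous_finsetSum _ fun i hi => (hg i hi).1, fun t => ?_⟩
  simp_rw [Complex.ofReal_sum, Finset.sum_mul]
  rw [intervalIntegral.integral_finsetSum, Finset.mul_sum]
  · exact Finset.sum_congr rfl fun i hi => (hg i hi).2 t
  · intro i hi
    exact vpRep_int (hg i hi).1 t

lemma chebP_cos (r : ℕ) (t : ℝ) :
    chebP r (Real.cos t) = (if r = 0 then √(1 / π) else √(2 / π)) * Real.cos (r * t) := by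
  unfold chebP
  split_ifs with h
  · simp [h]
  · congr 1
    have h1 := Polynomial.Chebyshev.T_real_cos t (r : ℤ)
    have h2 := Polynomial.Chebyshev.T_real_cos (Real.arccos (Real.cos t)) (r : ℤ)
    rw [Real.cos_arccos (Real.neg_one_le_cos t) (Real.cos_le_one t)] at h2
    rw [h1] at h2
    simpa using h2.symm

lemma vpRep_vpK (n m : ℕ) (hm : 0 < m) (hmn : m < n) (x : ℝ) :
    vpRep (2 * n) (fun t => vpK n m x (Real.cos t)) := by
  unfold vpK darboux
  refine vpRep_mul _ (vpRep_sum _ _ fun r hr => vpRep_sum _ _ fun s hs => vpRep_mul _ ?_)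
  simp_rw [chebP_cos]
  rw [Finset.mem_Icc] at hr
  rw [Finset.mem_range] at hs
  exact vpRep_mul _ (vpRep_cos _ _ (by omega))

lemma vpD_sq (L : ℕ) (u : ℝ) : ((‖vpD L u‖ ^ 2 : ℝ) : ℂ) =
    ∑ j ∈ Finset.range L, ∑ l ∈ Finset.range L, vpE ((l : ℤ) - j) u := by
  push_cast
  rw [← Complex.conj_mul']
  unfold vpD
  rw [map_sum, Finset.sum_mul]
  refine Finset.sum_congr rfl fun j _ => ?_
  rw [Finset.mul_sum]
  refine Finset.sum_congr rfl fun l _ => ?_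
  rw [vpE_conj, ← vpE_add]
  congr 1; ring

lemma vpE_grid (L : ℕ) (hL : 0 < L) (q : ℤ) (h1 : -(L : ℤ) < q) (h2 : q < L) (a : ℝ) :
    ∑ k ∈ Finset.range L, vpE q (a + k * (2 * π / L)) = if q = 0 then (L : ℂ) else 0 := by
  split_ifs with h
  · subst h; simp [vpE_zero]
  have hz := Complex.isPrimitiveRoot_exp L hL.ne'
  set z := Complex.exp (2 * π * Complex.I / L) with hzdef
  have hk : ∀ k : ℕ, vpE q (a + k * (2 * π / L)) = vpE q a * (z ^ q) ^ k := by
    intro k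
    rw [vpE_add_arg]
    congr 1
    rw [hzdef, ← Complex.exp_int_mul, ← Complex.exp_nat_mul]
    unfold vpE
    congr 1
    push_cast
    ring
  simp_rw [hk]
  rw [← Finset.mul_sum]
  have hne : z ^ q ≠ 1 := by
    rw [Ne, hz.zpow_eq_one_iff_dvd]
    intro hd
    exact h (Int.eq_zero_of_abs_lt_dvd hd (abs_lt.2 ⟨h1, h2⟩))
  rw [geom_sum_eq hne, ← zpow_natCast, ← zpow_mul, mul_comm, mul_comm q, zpow_mul, zpow_natCast,
    hz.pow_eq_one]
  simp

lemma vpD_parseval (L : ℕ) (hL : 0 < L) (a : ℝ) :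
    ∑ k ∈ Finset.range L, ‖vpD L (a + k * (2 * π / L))‖ ^ 2 = (L : ℝ) ^ 2 := by
  have : ((∑ k ∈ Finset.range L, ‖vpD L (a + k * (2 * π / L))‖ ^ 2 : ℝ) : ℂ) = (L : ℂ) ^ 2 := by
    rw [Complex.ofReal_sum]
    simp_rw [vpD_sq]
    rw [Finset.sum_comm]
    have : ∀ j ∈ Finset.range L, ∑ k ∈ Finset.range L, ∑ l ∈ Finset.range L,
        vpE ((l : ℤ) - j) (a + k * (2 * π / L)) = (L : ℂ) := by
      intro j hj
      rw [Finset.sum_comm]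
      rw [Finset.sum_eq_single j]
      · rw [Finset.mem_range] at hj
        rw [vpE_grid L hL _ (by omega) (by omega), if_pos (by ring)]
      · intro l hl hne
        rw [Finset.mem_range] at hl hj
        rw [vpE_grid L hL _ (by omega) (by omega), if_neg (by omega)]
      · intro hh; exact absurd hj hh
    rw [Finset.sum_congr rfl this]
    simp; ring
  exact_mod_cast this

/-- Marcinkiewicz-type inequality. -/
lemma vp_marc (n : ℕ) (hn : 2 ≤ n) (g : ℝ → ℝ) (hg : vpRep (2 * n) g) :
    ∑ k ∈ Finset.Icc 1 n, π / n * |g ((2 * (k : ℝ) - 1) * π / (2 * n))| ≤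
      3 * ∫ s in (-π)..π, |g s| := by
  have hn0 : (0 : ℝ) < n := by positivity
  have hpi := Real.pi_pos
  have hgc := hg.1
  have hDc := vpD_cont (2 * n)
  have hVc := vpV_cont (2 * n)
  have key : ∀ t, 2 * π * (2 * n) * |g t| ≤
      ∫ s in (-π)..π, |g s| * (3 * ‖vpD (2 * n) (t - s)‖ ^ 2) := by
    intro t
    have h := hg.2 t
    have h' := congrArg norm h
    have e : ‖(2 * π * ((2 * n : ℕ) : ℂ) * (g t : ℂ))‖ = 2 * π * (2 * n) * |g t| := by
      simp [abs_of_pos hpi]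
    rw [e] at h'
    rw [← h']
    refine (intervalIntegral.norm_integral_le_integral_norm (by linarith)).trans ?_
    refine intervalIntegral.integral_mono_on (by linarith)
      (Continuous.intervalIntegrable (by fun_prop) _ _)
      (Continuous.intervalIntegrable (by fun_prop) _ _) fun s _ => ?_
    rw [norm_mul, Complex.norm_real, Real.norm_eq_abs]
    exact mul_le_mul_of_nonneg_left (vpV_norm _ _) (abs_nonneg _)
  set t : ℕ → ℝ := fun k => (2 * (k : ℝ) - 1) * π / (2 * n) with ht
  have hsum : 2 * π * (2 * n) * ∑ k ∈ Finset.Icc 1 n, |g (t k)| ≤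
      3 * (2 * n) ^ 2 * ∫ s in (-π)..π, |g s| := by
    rw [Finset.mul_sum]
    refine (Finset.sum_le_sum fun k _ => key (t k)).trans ?_
    rw [← intervalIntegral.integral_finsetSum
      (fun k _ => Continuous.intervalIntegrable (by fun_prop) _ _),
      ← intervalIntegral.integral_const_mul]
    refine intervalIntegral.integral_mono_on (by linarith)
      (Continuous.intervalIntegrable (by fun_prop) _ _)
      (Continuous.intervalIntegrable (by fun_prop) _ _) fun s _ => ?_
    rw [← Finset.mul_sum, ← Finset.mul_sum]
    have hb : ∑ k ∈ Finset.Icc 1 n, ‖vpD (2 * n) (t k - s)‖ ^ 2 ≤ (2 * (n : ℝ)) ^ 2 := by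
      have hp := vpD_parseval (2 * n) (by omega) (-π / (2 * n) - s)
      push_cast at hp
      rw [← hp]
      have : ∀ k ∈ Finset.Icc 1 n, ‖vpD (2 * n) (t k - s)‖ ^ 2 =
          ‖vpD (2 * n) (-π / (2 * n) - s + k * (2 * π / (2 * n)))‖ ^ 2 := by
        intro k _
        congr 3
        simp only [ht]
        field_simp
        ring
      rw [Finset.sum_congr rfl this]
      refine Finset.sum_le_sum_of_subset_of_nonneg ?_ fun _ _ _ => by positivity
      intro k hk
      rw [Finset.mem_Icc] at hk
      rw [Finset.mem_range]; omega
    nlinarith [abs_nonneg (g s)]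
  rw [← Finset.mul_sum, div_mul_eq_mul_div, div_le_iff₀ hn0]
  have : (4 * (n : ℝ)) * (π * ∑ k ∈ Finset.Icc 1 n, |g (t k)|) ≤
      4 * n * (3 * (∫ s in (-π)..π, |g s|) * n) := by
    nlinarith
  exact le_of_mul_le_mul_left this (by positivity)

lemma vp_integral_cos (n m : ℕ) (x : ℝ) :
    ∫ y in (-1 : ℝ)..1, |vpK n m x y| * chebW y = ∫ t in (0 : ℝ)..π, |vpK n m x (Real.cos t)| := by
  have h := Polynomial.Chebyshev.integral_measureT_eq_integral_cos (f := fun y => |vpK n m x y|)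
  rw [Polynomial.Chebyshev.integral_measureT] at h
  rw [← h]
  simp [chebW]

lemma chebP_le (r : ℕ) (x : ℝ) : |chebP r x| ≤ 1 := by
  have hpi := Real.pi_gt_three
  have h2 : √(2 / π) ≤ 1 := by
    rw [Real.sqrt_le_one, div_le_one (by positivity)]; linarith
  unfold chebP
  split_ifs
  · rw [abs_of_nonneg (Real.sqrt_nonneg _), Real.sqrt_le_one, div_le_one (by positivity)]
    linarith
  · rw [abs_mul, abs_of_nonneg (Real.sqrt_nonneg _)]
    exact mul_le_one₀ h2 (abs_nonneg _) (Real.abs_cos_le_one _)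

lemma vpK_bound (n m : ℕ) : ∃ C, ∀ x y, |vpK n m x y| ≤ C := by
  refine ⟨(1 / (2 * (m : ℝ))) * ∑ r ∈ Finset.Icc (n - m) (n + m - 1),
    ∑ s ∈ Finset.range (r + 1), 1, fun x y => ?_⟩
  unfold vpK darboux
  rw [abs_mul, abs_of_nonneg (by positivity : (0 : ℝ) ≤ 1 / (2 * (m : ℝ)))]
  refine mul_le_mul_of_nonneg_left ?_ (by positivity)
  refine (Finset.abs_sum_le_sum_abs _ _).trans (Finset.sum_le_sum fun r _ => ?_)
  refine (Finset.abs_sum_le_sum_abs _ _).trans (Finset.sum_le_sum fun s _ => ?_)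
  rw [abs_mul]
  exact mul_le_one₀ (chebP_le _ _) (abs_nonneg _) (chebP_le _ _)

lemma vpK_symm (n m : ℕ) (x y : ℝ) : vpK n m x y = vpK n m y x := by
  unfold vpK darboux
  simp_rw [mul_comm (chebP _ x)]

lemma vp_le_cInf (n m : ℕ) (hm : 0 < m) (hmn : m < n) (x : ℝ) (hx : x ∈ Set.Icc (-1 : ℝ) 1) :
    ∫ t in (0 : ℝ)..π, |vpK n m x (Real.cos t)| ≤ cInf n m := by
  rw [← vp_integral_cos]
  unfold cInf
  refine le_ciSup (f := fun x : Set.Icc (-1 : ℝ) 1 =>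
    ∫ y in (-1 : ℝ)..1, |vpK n m x y| * chebW y) ?_ ⟨x, hx⟩
  obtain ⟨C, hC⟩ := vpK_bound n m
  refine ⟨∫ t in (0 : ℝ)..π, C, ?_⟩
  rintro _ ⟨z, rfl⟩
  simp only
  rw [vp_integral_cos]
  have hc := (vpRep_vpK n m hm hmn z).1
  exact intervalIntegral.integral_mono_on Real.pi_pos.le
    (hc.abs.intervalIntegrable _ _) (by simp) fun t _ => hC _ _

theorem scal_lebesgue_function_bound (n m : ℕ) (hm : 0 < m) (hmn : m < n)
    (x : ℝ) (hx : x ∈ Set.Icc (-1 : ℝ) 1) :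
    (∑ k ∈ Finset.Icc 1 n, |scal n m k x|) ≤
        (1 + 2 * Real.pi * ((n : ℝ) + (m : ℝ) - 1) / (n : ℝ)) * cInf n m ∧
      (1 + 2 * Real.pi * ((n : ℝ) + (m : ℝ) - 1) / (n : ℝ)) * cInf n m ≤
        (1 + 4 * Real.pi) * cInf n m := by
  have hpi := Real.pi_gt_three
  have hc := (vpRep_vpK n m hm hmn x).1
  have hle := vp_le_cInf n m hm hmn x hx
  have hnn : 0 ≤ ∫ t in (0 : ℝ)..π, |vpK n m x (Real.cos t)| :=
    intervalIntegral.integral_nonneg Real.pi_pos.le fun _ _ => abs_nonneg _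
  have hc0 : 0 ≤ cInf n m := hnn.trans hle
  have hn0 : (0 : ℝ) < n := by exact_mod_cast (by omega : 0 < n)
  have hm1 : (1 : ℝ) ≤ m := by exact_mod_cast hm
  have hmn1 : (m : ℝ) + 1 ≤ n := by exact_mod_cast hmn
  constructor
  · have h1 := vp_marc n (by omega) _ (vpRep_vpK n m hm hmn x)
    have h2 : ∫ s in (-π)..π, |vpK n m x (Real.cos s)| =
        2 * ∫ t in (0 : ℝ)..π, |vpK n m x (Real.cos t)| := by
      rw [← intervalIntegral.integral_add_adjacent_intervals (b := 0)
        (hc.abs.intervalIntegrable _ _) (hc.abs.intervalIntegrable _ _)]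
      have := intervalIntegral.integral_comp_neg (a := -π) (b := 0)
        (fun t => |vpK n m x (Real.cos t)|)
      simp only [Real.cos_neg, neg_neg, neg_zero] at this
      rw [this]; ring
    have h3 : ∑ k ∈ Finset.Icc 1 n, |scal n m k x| ≤ 6 * cInf n m := by
      have : ∀ k ∈ Finset.Icc 1 n, |scal n m k x| = π / n *
          |vpK n m x (Real.cos ((2 * (k : ℝ) - 1) * π / (2 * n)))| := by
        intro k _
        unfold scal
        rw [abs_mul, abs_of_nonneg (by positivity : (0 : ℝ) ≤ π / n), vpK_symm]
        rfl
      rw [Finset.sum_congr rfl this]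
      linarith
    refine h3.trans (mul_le_mul_of_nonneg_right ?_ hc0)
    have : 2 * π ≤ 2 * π * ((n : ℝ) + m - 1) / n := by
      rw [le_div_iff₀ hn0]
      exact mul_le_mul_of_nonneg_left (by linarith) (by positivity)
    linarith
  · refine mul_le_mul_of_nonneg_right ?_ hc0
    have : 2 * π * ((n : ℝ) + m - 1) / n ≤ 4 * π := by
      rw [div_le_iff₀ hn0]
      nlinarith
    linarith
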